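/- arXiv:1411.6354 — 3 statements merged into one kernel-verified Lean document; each statement's English description precedes it below -/
import Mathlib

section
/- Let w be a bounded weight structure on a triangulated category C, let M ∈ C_{w≥0} and N ∈ C_{w=0}, and choose a weight complex t(M) = (M^i) of M. Then the abelian group Hom_C(N, M) is isomorphic to the zeroth homology of the complex of abelian groups (Hom_{Hw}(N, M^i))_{i∈ℤ}, i.e., to ker(Hom(N, M^0) → Hom(N, M^1)) / im(Hom(N, M^{−1}) → Hom(N, M^0)), where the maps are induced by the boundary morphisms of t(M). -/
/-!
Let `M ∈ C_{w≥l}` and `N ∈ C_{w≤l}`. Both steps of the proof rest on the observation that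
`Hom(P, w_{≤k}M) → Hom(P, M)` is injective for `P ∈ C_{w≤k-1}` and surjective for `P ∈ C_{w≤k}`.

* By orthogonality `w_{≤l-1}M ⟶ M` is zero, hence so is `w_{≤l-1}M ⟶ w_{≤l}M`, and likewise
  `w_{≤l-2}M ⟶ w_{≤l-1}M`. Thus `w_{≤l}M ⟶ M^{-l}[l]` and `w_{≤l-1}M ⟶ M^{1-l}[l-1]` are
  monomorphisms, which makes `w_{≤l}M` the kernel of the boundary `M^{-l}[l] ⟶ M^{1-l}[l]`.
* A morphism `N ⟶ w_{≤l}M` vanishes in `M` iff it vanishes in `w_{≤l+1}M`, i.e. iff it factors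
  through `M^{-l-1}[l] ⟶ w_{≤l}M`. So `Hom(N, M)` is the cokernel of
  `Hom(N, M^{-l-1}[l]) → Hom(N, w_{≤l}M)`.
-/

open CategoryTheory CategoryTheory.Limits CategoryTheory.Pretriangulated

namespace CWH

/-- `X` is a retract of `Y`. -/
def IsRetract {C : Type*} [Category C] (X Y : C) : Prop :=
  ∃ (i : X ⟶ Y) (r : Y ⟶ X), i ≫ r = 𝟙 X

/-- The Karoubi-closure of a class of objects: all retracts of its objects. -/
def retractClosure {C : Type*} [Category C] (S : Set C) : Set C :=
  {X : C | ∃ Y ∈ S, IsRetract X Y}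

variable (C : Type*) [Category C] [HasZeroObject C] [HasShift C ℤ]
  [Preadditive C] [∀ n : ℤ, (shiftFunctor C n).Additive] [Pretriangulated C]

/-- A weight structure on a (pre)triangulated category (homological convention):
a pair of retract-closed classes `LE = C_{w≤0}` and `GE = C_{w≥0}` such that
`C_{w≤0} ⊆ C_{w≤0}[1]`, `C_{w≥0}[1] ⊆ C_{w≥0}`, `Hom(C_{w≤0}, C_{w≥0}[1]) = 0`,
and every object admits a weight decomposition. -/
structure WeightStructure where
  LE : Set C
  GE : Set C
  retract_LE : ∀ ⦃X Y : C⦄, IsRetract X Y → Y ∈ LE → X ∈ LE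
  retract_GE : ∀ ⦃X Y : C⦄, IsRetract X Y → Y ∈ GE → X ∈ GE
  shift_LE : ∀ ⦃X : C⦄, X ∈ LE → X⟦(-1 : ℤ)⟧ ∈ LE
  shift_GE : ∀ ⦃X : C⦄, X ∈ GE → X⟦(1 : ℤ)⟧ ∈ GE
  orthogonal : ∀ ⦃X Y : C⦄, X ∈ LE → Y ∈ GE → ∀ f : X ⟶ Y⟦(1 : ℤ)⟧, f = 0
  decomp : ∀ M : C, ∃ (X Y : C) (f : X ⟶ M) (g : M ⟶ Y) (h : Y ⟶ X⟦(1 : ℤ)⟧),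
    Triangle.mk f g h ∈ (distTriang C) ∧ X ∈ LE ∧ Y⟦(-1 : ℤ)⟧ ∈ GE

variable {C}

namespace WeightStructure

variable (w : WeightStructure C)

/-- `C_{w≤i} = C_{w≤0}[i]`. -/
def le (i : ℤ) : Set C := {X : C | X⟦(-i)⟧ ∈ w.LE}

/-- `C_{w≥i} = C_{w≥0}[i]`. -/
def ge (i : ℤ) : Set C := {X : C | X⟦(-i)⟧ ∈ w.GE}

/-- `C_{w=i} = C_{w≤i} ∩ C_{w≥i}`. -/
def eqw (i : ℤ) : Set C := w.le i ∩ w.ge i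

/-- `w` is bounded if every object lies in some `C_{w≤i}` and in some `C_{w≥i}`. -/
def IsBounded : Prop := ∀ X : C, (∃ i : ℤ, X ∈ w.le i) ∧ (∃ i : ℤ, X ∈ w.ge i)

end WeightStructure

/-- The extension-closure of a class `S` of objects: the smallest class containing
the zero objects and `S` and closed under extensions (distinguished triangles). -/
inductive ExtClosure (S : Set C) : C → Prop
  | zero (X : C) : IsZero X → ExtClosure S X
  | of (X : C) : X ∈ S → ExtClosure S X
  | ext {A E B : C} (f : A ⟶ E) (g : E ⟶ B) (h : B ⟶ A⟦(1 : ℤ)⟧) :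
      Triangle.mk f g h ∈ (distTriang C) → ExtClosure S A → ExtClosure S B → ExtClosure S E

/-- The smallest full Karoubi-closed (strict) triangulated subcategory containing `S`:
closure under zero objects, shifts, cones and retracts. -/
inductive TriangClosure (S : Set C) : C → Prop
  | of (X : C) : X ∈ S → TriangClosure S X
  | zero (X : C) : IsZero X → TriangClosure S X
  | shift (X : C) (n : ℤ) : TriangClosure S X → TriangClosure S (X⟦n⟧)
  | ext {X Y Z : C} (f : X ⟶ Y) (g : Y ⟶ Z) (h : Z ⟶ X⟦(1 : ℤ)⟧) :
      Triangle.mk f g h ∈ (distTriang C) → TriangClosure S X → TriangClosure S Y →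
      TriangClosure S Z
  | retract (X Y : C) : IsRetract X Y → TriangClosure S Y → TriangClosure S X

/-- A (strict) full triangulated subcategory, given by its class of objects:
it contains the zero objects and is closed under shifts and under the
two-out-of-three property for distinguished triangles. -/
structure IsTriangulatedSub (P : Set C) : Prop where
  zero : ∀ X : C, IsZero X → X ∈ P
  shift : ∀ X ∈ P, ∀ n : ℤ, X⟦n⟧ ∈ P
  ext₂ : ∀ ⦃X Y Z : C⦄ (f : X ⟶ Y) (g : Y ⟶ Z) (h : Z ⟶ X⟦(1 : ℤ)⟧),
    Triangle.mk f g h ∈ (distTriang C) → X ∈ P → Z ∈ P → Y ∈ P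
  ext₃ : ∀ ⦃X Y Z : C⦄ (f : X ⟶ Y) (g : Y ⟶ Z) (h : Z ⟶ X⟦(1 : ℤ)⟧),
    Triangle.mk f g h ∈ (distTriang C) → X ∈ P → Y ∈ P → Z ∈ P
  ext₁ : ∀ ⦃X Y Z : C⦄ (f : X ⟶ Y) (g : Y ⟶ Z) (h : Z ⟶ X⟦(1 : ℤ)⟧),
    Triangle.mk f g h ∈ (distTriang C) → Y ∈ P → Z ∈ P → X ∈ P

/-- A weight structure on the full (triangulated) subcategory of `C` whose objects
are given by the class `P`; retracts are taken inside `P` and the distinguished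
triangles of the subcategory are the distinguished triangles of `C` with vertices
in `P`. -/
structure IsWeightStructureOn (P LEs GEs : Set C) : Prop where
  le_sub : LEs ⊆ P
  ge_sub : GEs ⊆ P
  retract_le : ∀ ⦃X Y : C⦄, X ∈ P → IsRetract X Y → Y ∈ LEs → X ∈ LEs
  retract_ge : ∀ ⦃X Y : C⦄, X ∈ P → IsRetract X Y → Y ∈ GEs → X ∈ GEs
  shift_le : ∀ ⦃X : C⦄, X ∈ LEs → X⟦(-1 : ℤ)⟧ ∈ LEs
  shift_ge : ∀ ⦃X : C⦄, X ∈ GEs → X⟦(1 : ℤ)⟧ ∈ GEs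
  orthogonal : ∀ ⦃X Y : C⦄, X ∈ LEs → Y ∈ GEs → ∀ f : X ⟶ Y⟦(1 : ℤ)⟧, f = 0
  decomp : ∀ M ∈ P, ∃ (X Y : C) (f : X ⟶ M) (g : M ⟶ Y) (h : Y ⟶ X⟦(1 : ℤ)⟧),
    Triangle.mk f g h ∈ (distTriang C) ∧ X ∈ LEs ∧ Y⟦(-1 : ℤ)⟧ ∈ GEs

/-- The class of morphisms of `C` whose cone lies in `P`; the Verdier quotient
`C/P` is the localization of `C` at this class. -/
def coneIn (P : Set C) : MorphismProperty C := fun X Y f =>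
  ∃ (Z : C) (g : Y ⟶ Z) (h : Z ⟶ X⟦(1 : ℤ)⟧),
    Triangle.mk f g h ∈ (distTriang C) ∧ Z ∈ P

/-- A weight Postnikov tower for `M`: choices of weight truncations `trunc l = w_{≤l}M`
(with cones `conePt l = w_{≥l+1}M`), of the connecting morphisms between them that are
compatible with `𝟙 M`, and of the distinguished triangles
`w_{≤l}M → w_{≤l+1}M → M^{-l-1}[l+1] → (w_{≤l}M)[1]`; the objects `termAt l = M^{-l}`
lie in the heart and are the terms of the associated weight complex `t(M)`, whose
boundary morphisms `bd (l+1) l : M^{-l-1} → M^{-l}` are obtained by composing the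
connecting morphisms of two consecutive triangles. -/
structure WeightPostnikovTower (w : WeightStructure C) (M : C) where
  trunc : ℤ → C
  trunc_mem : ∀ l : ℤ, trunc l ∈ w.le l
  ι : ∀ l : ℤ, trunc l ⟶ M
  conePt : ℤ → C
  cone_mem : ∀ l : ℤ, conePt l ∈ w.ge (l + 1)
  coneπ : ∀ l : ℤ, M ⟶ conePt l
  coneδ : ∀ l : ℤ, conePt l ⟶ (trunc l)⟦(1 : ℤ)⟧
  trunc_dist : ∀ l : ℤ, Triangle.mk (ι l) (coneπ l) (coneδ l) ∈ (distTriang C)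
  step : ∀ l : ℤ, trunc l ⟶ trunc (l + 1)
  step_ι : ∀ l : ℤ, step l ≫ ι (l + 1) = ι l
  termAt : ℤ → C
  term_mem : ∀ l : ℤ, termAt l ∈ w.LE ∧ termAt l ∈ w.GE
  sπ : ∀ l : ℤ, trunc l ⟶ (termAt l)⟦l⟧
  sδ : ∀ l : ℤ, (termAt (l + 1))⟦(l + 1 : ℤ)⟧ ⟶ (trunc l)⟦(1 : ℤ)⟧
  step_dist : ∀ l : ℤ, Triangle.mk (step l) (sπ (l + 1)) (sδ l) ∈ (distTriang C)
  bd : ∀ i j : ℤ, termAt i ⟶ termAt j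
  bd_shape : ∀ i j : ℤ, j + 1 ≠ i → bd i j = 0
  bd_eq : ∀ l : ℤ,
    (shiftFunctor C (l + 1)).map (bd (l + 1) l) ≫
      (shiftFunctorAdd' C l 1 (l + 1) rfl).hom.app (termAt l) =
    sδ l ≫ (shiftFunctor C (1 : ℤ)).map (sπ l)

/-- The differential of the weight complex associated to a weight Postnikov tower,
in "homological" indexing: the `l`-th term `termAt l` is the `(-l)`-th term `M^{-l}`
of the weight complex. -/
def towerD {w : WeightStructure C} {M : C} (T : WeightPostnikovTower w M) :
    ∀ l : ℤ, T.termAt (l + 1) ⟶ T.termAt l :=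
  fun l => T.bd (l + 1) l

section Complexes

variable {X Y : ℤ → C}

/-- A morphism of ("homologically indexed") complexes. -/
def IsChainMapDown (X Y : ℤ → C) (dX : ∀ l : ℤ, X (l + 1) ⟶ X l)
    (dY : ∀ l : ℤ, Y (l + 1) ⟶ Y l) (f : ∀ l : ℤ, X l ⟶ Y l) : Prop :=
  ∀ l : ℤ, f (l + 1) ≫ dY l = dX l ≫ f l

/-- Two families of morphisms of complexes are chain homotopic. -/
def ChainHomotopicDown (X Y : ℤ → C) (dX : ∀ l : ℤ, X (l + 1) ⟶ X l)
    (dY : ∀ l : ℤ, Y (l + 1) ⟶ Y l) (f g : ∀ l : ℤ, X l ⟶ Y l) : Prop :=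
  ∃ s : ∀ l : ℤ, X l ⟶ Y (l + 1),
    ∀ l : ℤ, f (l + 1) - g (l + 1) = s (l + 1) ≫ dY (l + 1) + dX l ≫ s l

/-- Two complexes are homotopy equivalent (i.e., isomorphic in the homotopy category). -/
def HomotopyEquivDown (X Y : ℤ → C) (dX : ∀ l : ℤ, X (l + 1) ⟶ X l)
    (dY : ∀ l : ℤ, Y (l + 1) ⟶ Y l) : Prop :=
  ∃ (f : ∀ l : ℤ, X l ⟶ Y l) (g : ∀ l : ℤ, Y l ⟶ X l),
    IsChainMapDown X Y dX dY f ∧ IsChainMapDown Y X dY dX g ∧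
    ChainHomotopicDown X X dX dX (fun l => f l ≫ g l) (fun l => 𝟙 (X l)) ∧
    ChainHomotopicDown Y Y dY dY (fun l => g l ≫ f l) (fun l => 𝟙 (Y l))

end Complexes

/-- Identifies `B` with the homology at `A₁` of the complex `ψ ∘ δ : A₀ → A₁`, `β : A₁ → A₂`, when
`ψ : K → A₁` is a kernel of `β` and `φ : K → B` is a cokernel of `δ : A₀ → K`. -/
noncomputable def addEquivHomologyOfExact {A₀ A₁ A₂ K B : Type*} [AddCommGroup A₀]
    [AddCommGroup A₁] [AddCommGroup A₂] [AddCommGroup K] [AddCommGroup B]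
    {δ : A₀ →+ K} {φ : K →+ B} {ψ : K →+ A₁} {β : A₁ →+ A₂}
    (hδφ : Function.Exact δ φ) (hφ : Function.Surjective φ)
    (hψ : Function.Injective ψ) (hψβ : Function.Exact ψ β) :
    B ≃+ β.ker ⧸ (ψ.comp δ).range.addSubgroupOf β.ker :=
  let e : K ≃+ β.ker :=
    (AddMonoidHom.ofInjective hψ).trans (AddEquiv.addSubgroupCongr hψβ.addMonoidHom_ker_eq.symm)
  (QuotientAddGroup.quotientKerEquivOfSurjective φ hφ).symm.trans
    (QuotientAddGroup.congr φ.ker _ e (by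
      rw [hδφ.addMonoidHom_ker_eq, AddMonoidHom.range_comp]
      ext ⟨x, hx⟩
      have coe_e (k : K) : (e k : A₁) = ψ k := rfl
      simp [AddSubgroup.mem_addSubgroupOf, Subtype.ext_iff, coe_e]))

lemma exists_map_shift_eq_comp_mor₃ {W X Y Z : C} {f : X ⟶ Y} {g : Y ⟶ Z} {h : Z ⟶ X⟦(1 : ℤ)⟧}
    (hT : Triangle.mk f g h ∈ distTriang C) (k : W ⟶ X) (hk : k ≫ f = 0) :
    ∃ k' : W⟦(1 : ℤ)⟧ ⟶ Z, k⟦(1 : ℤ)⟧' = k' ≫ h :=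
  have hk' : k⟦(1 : ℤ)⟧' ≫ f⟦(1 : ℤ)⟧' = 0 := by rw [← Functor.map_comp, hk, Functor.map_zero]
  Triangle.coyoneda_exact₁ _ hT _ hk'

namespace WeightStructure

variable (w : WeightStructure C) {X Y : C}

lemma mem_LE_of_iso (e : X ≅ Y) (hY : Y ∈ w.LE) : X ∈ w.LE :=
  w.retract_LE ⟨e.hom, e.inv, e.hom_inv_id⟩ hY

lemma mem_GE_of_iso (e : X ≅ Y) (hY : Y ∈ w.GE) : X ∈ w.GE :=
  w.retract_GE ⟨e.hom, e.inv, e.hom_inv_id⟩ hY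

lemma LE_subset_le_zero : w.LE ⊆ w.le 0 := fun X hX =>
  w.mem_LE_of_iso ((shiftFunctorZero' C (-0 : ℤ) neg_zero).app X) hX

lemma GE_subset_ge_zero : w.GE ⊆ w.ge 0 := fun X hX =>
  w.mem_GE_of_iso ((shiftFunctorZero' C (-0 : ℤ) neg_zero).app X) hX

lemma shift_mem_le {i : ℤ} (hX : X ∈ w.le i) (n : ℤ) : X⟦n⟧ ∈ w.le (i + n) :=
  w.mem_LE_of_iso ((shiftFunctorAdd' C n (-(i + n)) (-i) (by ring)).symm.app X) hX

lemma antitone_ge : Antitone w.ge :=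
  antitone_int_of_succ_le fun i X hX =>
    w.mem_GE_of_iso ((shiftFunctorAdd' C (-(i + 1)) 1 (-i) (by ring)).app X) (w.shift_GE hX)

lemma hom_eq_zero {i j : ℤ} (hij : i < j) (hX : X ∈ w.le i) (hY : Y ∈ w.ge j) (f : X ⟶ Y) :
    f = 0 := by
  let e : Y⟦-i⟧ ≅ Y⟦-(i + 1)⟧⟦(1 : ℤ)⟧ := (shiftFunctorAdd' C (-(i + 1)) 1 (-i) (by ring)).app Y
  have hfe : f⟦-i⟧' ≫ e.hom = 0 := w.orthogonal hX (w.antitone_ge hij hY) _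
  apply (shiftFunctor C (-i)).map_injective
  rw [Functor.map_zero, ← cancel_mono e.hom, hfe, zero_comp]

end WeightStructure

namespace WeightPostnikovTower

variable {w : WeightStructure C} {M N : C} (T : WeightPostnikovTower w M) {l m : ℤ}

lemma rightComp_ι_surjective (hN : N ∈ w.le l) :
    Function.Surjective (Preadditive.rightComp N (T.ι l)) := fun f =>
  (Triangle.coyoneda_exact₂ _ (T.trunc_dist l) f
    (w.hom_eq_zero (lt_add_one l) hN (T.cone_mem l) _)).imp fun _ hg => hg.symm

lemma eq_zero_of_comp_ι_eq_zero (hN : N ∈ w.le l) (hl : l < m) {f : N ⟶ T.trunc m}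
    (hf : f ≫ T.ι m = 0) : f = 0 := by
  obtain ⟨g, hg⟩ := exists_map_shift_eq_comp_mor₃ (T.trunc_dist m) f hf
  have hg_zero : g = 0 := w.hom_eq_zero (by lia) (w.shift_mem_le hN 1) (T.cone_mem m) g
  apply (shiftFunctor C (1 : ℤ)).map_injective
  rw [hg, hg_zero, zero_comp, Functor.map_zero]

lemma step_eq_zero (hM : M ∈ w.ge m) (hl : l < m) : T.step l = 0 :=
  T.eq_zero_of_comp_ι_eq_zero (T.trunc_mem l) (lt_add_one l)
    (w.hom_eq_zero hl (T.trunc_mem l) hM _)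

lemma mono_sπ (hM : M ∈ w.ge m) (hl : l ≤ m) : Mono (T.sπ l) := by
  obtain ⟨k, rfl⟩ : ∃ k, l = k + 1 := ⟨l - 1, by ring⟩
  exact Triangle.mono₂ _ (T.step_dist k) (T.step_eq_zero hM (by lia))

/-- The desuspension `M^{-l-1}[l] ⟶ w_{≤l}M` of the connecting morphism `sδ l`. -/
noncomputable def fromTerm (l : ℤ) : (T.termAt (l + 1))⟦l⟧ ⟶ T.trunc l :=
  (shiftFunctor C (1 : ℤ)).preimage
    ((shiftFunctorAdd' C l 1 (l + 1) rfl).inv.app (T.termAt (l + 1)) ≫ T.sδ l)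

lemma map_fromTerm (l : ℤ) : (T.fromTerm l)⟦(1 : ℤ)⟧' =
    (shiftFunctorAdd' C l 1 (l + 1) rfl).inv.app (T.termAt (l + 1)) ≫ T.sδ l :=
  (shiftFunctor C (1 : ℤ)).map_preimage _

lemma fromTerm_sπ (l : ℤ) : T.fromTerm l ≫ T.sπ l = (T.bd (l + 1) l)⟦l⟧' := by
  apply (shiftFunctor C (1 : ℤ)).map_injective
  rw [Functor.map_comp, map_fromTerm, Category.assoc, ← bd_eq]
  exact NatIso.naturality_1 (shiftFunctorAdd' C l 1 (l + 1) rfl) (T.bd (l + 1) l)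

lemma comp_step_eq_zero_iff (f : N ⟶ T.trunc l) :
    f ≫ T.step l = 0 ↔ ∃ g, g ≫ T.fromTerm l = f := by
  constructor
  · intro hf
    obtain ⟨g, hg⟩ := exists_map_shift_eq_comp_mor₃ (T.step_dist l) f hf
    refine ⟨(shiftFunctor C (1 : ℤ)).preimage
      (g ≫ (shiftFunctorAdd' C l 1 (l + 1) rfl).hom.app _), ?_⟩
    apply (shiftFunctor C (1 : ℤ)).map_injective
    rw [Functor.map_comp, Functor.map_preimage, map_fromTerm, hg, Category.assoc,
      Iso.hom_inv_id_app_assoc]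
  · rintro ⟨g, rfl⟩
    have hδ : T.sδ l ≫ (T.step l)⟦(1 : ℤ)⟧' = 0 := comp_distTriang_mor_zero₃₁ _ (T.step_dist l)
    apply (shiftFunctor C (1 : ℤ)).map_injective
    simp only [Functor.map_comp, map_fromTerm, Category.assoc, hδ, comp_zero, Functor.map_zero]

lemma exact_rightComp_fromTerm_ι (hN : N ∈ w.le l) :
    Function.Exact (Preadditive.rightComp N (T.fromTerm l)) (Preadditive.rightComp N (T.ι l)) := by
  intro f
  have hι : f ≫ T.ι l = (f ≫ T.step l) ≫ T.ι (l + 1) := by rw [Category.assoc, T.step_ι]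
  calc f ≫ T.ι l = 0
    _ ↔ f ≫ T.step l = 0 :=
      ⟨fun hf => T.eq_zero_of_comp_ι_eq_zero hN (lt_add_one l) (hι ▸ hf),
        fun hf => by rw [hι, hf, zero_comp]⟩
    _ ↔ ∃ g, g ≫ T.fromTerm l = f := T.comp_step_eq_zero_iff f

lemma exact_rightComp_sπ_map_bd (hM : M ∈ w.ge m) (hlm : l + 1 = m) (N : C) :
    Function.Exact (Preadditive.rightComp N (T.sπ m))
      (Preadditive.rightComp N ((T.bd m l)⟦m⟧')) := by
  subst hlm
  intro g
  have : Mono (T.sπ l) := T.mono_sπ hM (by lia)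
  calc g ≫ (T.bd (l + 1) l)⟦l + 1⟧' = 0
    _ ↔ (g ≫ T.sδ l) ≫ (T.sπ l)⟦(1 : ℤ)⟧' = 0 := by
      rw [← cancel_mono ((shiftFunctorAdd' C l 1 (l + 1) rfl).hom.app (T.termAt l)),
        Category.assoc, T.bd_eq, zero_comp, Category.assoc]
    _ ↔ g ≫ T.sδ l = 0 := by rw [← cancel_mono ((T.sπ l)⟦(1 : ℤ)⟧'), zero_comp]
    _ ↔ ∃ f, f ≫ T.sπ (l + 1) = g :=
      ⟨fun hg => (Triangle.coyoneda_exact₃ _ (T.step_dist l) g hg).imp fun _ hf => hf.symm, by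
        rintro ⟨f, rfl⟩
        have hπ : T.sπ (l + 1) ≫ T.sδ l = 0 := comp_distTriang_mor_zero₂₃ _ (T.step_dist l)
        rw [Category.assoc, hπ, comp_zero]⟩

/-- The morphism `w_{≤0}M ⟶ M⁰`, i.e. `sπ 0` without the shift by zero. -/
noncomputable def toTermZero : T.trunc 0 ⟶ T.termAt 0 :=
  T.sπ 0 ≫ (shiftFunctorZero C ℤ).hom.app (T.termAt 0)

/-- The morphism `M^{-1} ⟶ w_{≤0}M`, i.e. `fromTerm 0` without the shift by zero. -/
noncomputable def fromTermOne : T.termAt 1 ⟶ T.trunc 0 :=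
  (shiftFunctorZero C ℤ).inv.app (T.termAt 1) ≫ T.fromTerm 0

lemma fromTermOne_toTermZero : T.fromTermOne ≫ T.toTermZero = T.bd 1 0 := by
  have h : T.fromTerm 0 ≫ T.sπ 0 = (T.bd 1 0)⟦(0 : ℤ)⟧' := T.fromTerm_sπ 0
  rw [fromTermOne, toTermZero, Category.assoc, reassoc_of% h]
  exact NatIso.naturality_1 (shiftFunctorZero C ℤ) (T.bd 1 0)

lemma exact_rightComp_fromTermOne_ι (hN : N ∈ w.LE) :
    Function.Exact (Preadditive.rightComp N T.fromTermOne) (Preadditive.rightComp N (T.ι 0)) := by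
  intro f
  let e := (shiftFunctorZero C ℤ).app (T.termAt 1)
  calc f ≫ T.ι 0 = 0
    _ ↔ ∃ g : N ⟶ (T.termAt 1)⟦(0 : ℤ)⟧, g ≫ T.fromTerm 0 = f :=
      T.exact_rightComp_fromTerm_ι (w.LE_subset_le_zero hN) f
    _ ↔ ∃ g : N ⟶ T.termAt 1, (g ≫ e.inv) ≫ T.fromTerm 0 = f := e.homToEquiv.exists_congr_left
    _ ↔ ∃ g : N ⟶ T.termAt 1, g ≫ T.fromTermOne = f := by
      simp only [Category.assoc, fromTermOne, Iso.app_inv, e]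

lemma mono_toTermZero (hM : M ∈ w.GE) : Mono T.toTermZero :=
  have := T.mono_sπ (w.GE_subset_ge_zero hM) le_rfl
  mono_comp _ _

lemma exact_rightComp_toTermZero_bd (hM : M ∈ w.GE) (N : C) :
    Function.Exact (Preadditive.rightComp N T.toTermZero)
      (Preadditive.rightComp N (T.bd 0 (-1))) := by
  intro g
  let e (k : ℤ) := (shiftFunctorZero C ℤ).app (T.termAt k)
  have hbd : (e 0).inv ≫ (T.bd 0 (-1))⟦(0 : ℤ)⟧' = T.bd 0 (-1) ≫ (e (-1)).inv :=
    ((shiftFunctorZero C ℤ).inv.naturality (T.bd 0 (-1))).symm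
  calc g ≫ T.bd 0 (-1) = 0
    _ ↔ (g ≫ (e 0).inv) ≫ (T.bd 0 (-1))⟦(0 : ℤ)⟧' = 0 := by
      rw [Category.assoc, hbd, ← Category.assoc, ← cancel_mono (e (-1)).inv, zero_comp]
    _ ↔ ∃ f, f ≫ T.sπ 0 = g ≫ (e 0).inv :=
      T.exact_rightComp_sπ_map_bd (w.GE_subset_ge_zero hM) (neg_add_cancel 1) N _
    _ ↔ ∃ f, (f ≫ T.sπ 0) ≫ (e 0).hom = g := by simp only [Iso.eq_comp_inv]
    _ ↔ ∃ f, f ≫ T.toTermZero = g := by simp only [Category.assoc, toTermZero, Iso.app_hom, e]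

end WeightPostnikovTower

theorem statement17_general (w : WeightStructure C) {M N : C} (hM : M ∈ w.GE) (hN : N ∈ w.LE)
    (T : WeightPostnikovTower w M) :
    Nonempty
      ((N ⟶ M) ≃+
        (AddMonoidHom.ker (Preadditive.rightComp N (T.bd 0 (-1))) ⧸
          (AddMonoidHom.range (Preadditive.rightComp N (T.bd 1 0))).addSubgroupOf
            (AddMonoidHom.ker (Preadditive.rightComp N (T.bd 0 (-1)))))) := by
  have hbd : Preadditive.rightComp N (T.bd 1 0) =
      (Preadditive.rightComp N T.toTermZero).comp (Preadditive.rightComp N T.fromTermOne) := by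
    ext g
    change g ≫ T.bd 1 0 = (g ≫ T.fromTermOne) ≫ T.toTermZero
    rw [Category.assoc, T.fromTermOne_toTermZero]
  have := T.mono_toTermZero hM
  rw [hbd]
  exact ⟨addEquivHomologyOfExact (T.exact_rightComp_fromTermOne_ι hN)
    (T.rightComp_ι_surjective (w.LE_subset_le_zero hN))
    (fun _ _ h => (cancel_mono T.toTermZero).1 h) (T.exact_rightComp_toTermZero_bd hM N)⟩

/-- for a bounded weight structure, `M ∈ C_{w≥0}`, `N ∈ C_{w=0}` and a
weight complex `t(M)` with terms `M^i = termAt (-i)`, the group `Hom(N, M)` is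
isomorphic to the zeroth homology of the complex `Hom(N, M^*)`, i.e., to
`ker(Hom(N,M^0) → Hom(N,M^1)) / im(Hom(N,M^{-1}) → Hom(N,M^0))` (the image is
intersected with the kernel, which it lies in). -/
theorem statement17 (w : WeightStructure C) (hw : w.IsBounded) (M N : C)
    (hM : M ∈ w.GE) (hN : N ∈ w.LE ∩ w.GE)
    (T : WeightPostnikovTower w M) :
    Nonempty
      ((N ⟶ M) ≃+
        (AddMonoidHom.ker (Preadditive.rightComp N (T.bd 0 (-1))) ⧸
          (AddMonoidHom.range (Preadditive.rightComp N (T.bd 1 0))).addSubgroupOf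
            (AddMonoidHom.ker (Preadditive.rightComp N (T.bd 0 (-1)))))) :=
  statement17_general w hM hN.1 T

end CWH
end

section
/- Let w be a bounded weight structure on a triangulated category C, let D be a full triangulated subcategory of C such that w restricts to D, and let l : C → C/D denote the Verdier quotient functor. Let M ∈ C_{w≥0}, N ∈ C_{w=0}, and let f : N → M be a morphism with l(f) = 0 in C/D. Then f factors through some object of D lying in C_{w=0}. -/
/-!
If `f : N ⟶ M` factors through some object of `D`, weight decompositions in `D` cut that object
down to the heart: as `N` has weight `≤ 0`, the part of weight `≥ 1` can be discarded, and then,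
as `M` has weight `≥ 0`, so can the part of weight `≤ -1`. What remains has weight `≥ 0` by
construction, and weight `≤ 0` because `C_{w≤0}` is the left orthogonal of `C_{w≥1}`, hence closed
under extensions.

It remains to see that a morphism killed by the Verdier quotient factors through an object of `D`.
The category `C` is only assumed pretriangulated, so the morphisms with cone in `D` need not be
stable under composition. Their multiplicative closure nevertheless has a left calculus of
fractions. Hence `f` is annihilated by a finite composition of morphisms with cone in `D`, and
these can be removed one at a time.
-/

open CategoryTheory CategoryTheory.Limits CategoryTheory.Pretriangulated

namespace CWH

variable (C : Type*) [Category C] [HasZeroObject C] [HasShift C ℤ]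
  [Preadditive C] [∀ n : ℤ, (shiftFunctor C n).Additive] [Pretriangulated C]

variable {C}

section MultiplicativeClosure

variable {A : Type*} [Category A] {W : MorphismProperty A}

lemma exists_leftFraction_multiplicativeClosure
    (ore : ∀ ⦃X Y : A⦄ (φ : W.RightFraction X Y),
      ∃ ψ : W.LeftFraction X Y, φ.f ≫ ψ.s = φ.s ≫ ψ.f)
    {X X' Y : A} {s : X' ⟶ X} (hs : W.multiplicativeClosure s) (f : X' ⟶ Y) :
    ∃ ψ : W.multiplicativeClosure.LeftFraction X Y, f ≫ ψ.s = s ≫ ψ.f := by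
  induction hs with
  | of s hs =>
    obtain ⟨ψ, hψ⟩ := ore (.mk s hs f)
    exact ⟨.mk ψ.f ψ.s (.of _ ψ.hs), hψ⟩
  | id => exact ⟨.mk f (𝟙 Y) (.id _), by simp⟩
  | comp_of s₁ s₂ _ hs₂ ih =>
    obtain ⟨ψ₁, h₁⟩ := ih f
    obtain ⟨ψ₂, h₂⟩ : ∃ ψ : W.LeftFraction _ _, ψ₁.f ≫ ψ.s = s₂ ≫ ψ.f := ore (.mk s₂ hs₂ ψ₁.f)
    exact ⟨.mk ψ₂.f (ψ₁.s ≫ ψ₂.s) (.comp_of _ _ ψ₁.hs ψ₂.hs),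
      by rw [reassoc_of% h₁, h₂, Category.assoc]⟩

lemma exists_comp_eq_comp_multiplicativeClosure
    (ext : ∀ ⦃X' X Y : A⦄ (f₁ f₂ : X ⟶ Y) (s : X' ⟶ X), W s → s ≫ f₁ = s ≫ f₂ →
      ∃ (Y' : A) (t : Y ⟶ Y') (_ : W t), f₁ ≫ t = f₂ ≫ t)
    {X' X Y : A} {s : X' ⟶ X} (hs : W.multiplicativeClosure s) (f₁ f₂ : X ⟶ Y)
    (h : s ≫ f₁ = s ≫ f₂) :
    ∃ (Y' : A) (t : Y ⟶ Y') (_ : W.multiplicativeClosure t), f₁ ≫ t = f₂ ≫ t := by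
  induction hs with
  | of s hs =>
    obtain ⟨Y', t, ht, h'⟩ := ext f₁ f₂ s hs h
    exact ⟨Y', t, .of _ ht, h'⟩
  | id => exact ⟨Y, 𝟙 Y, .id _, by simpa using h⟩
  | comp_of s₁ s₂ _ hs₂ ih =>
    obtain ⟨Y₁, t₁, ht₁, h₁⟩ := ih (s₂ ≫ f₁) (s₂ ≫ f₂) (by simpa using h)
    obtain ⟨Y₂, t₂, ht₂, h₂⟩ := ext (f₁ ≫ t₁) (f₂ ≫ t₁) s₂ hs₂ (by simpa using h₁)
    exact ⟨Y₂, t₁ ≫ t₂, .comp_of _ _ ht₁ ht₂, by simpa using h₂⟩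

lemma hasLeftCalculusOfFractions_multiplicativeClosure
    (ore : ∀ ⦃X Y : A⦄ (φ : W.RightFraction X Y),
      ∃ ψ : W.LeftFraction X Y, φ.f ≫ ψ.s = φ.s ≫ ψ.f)
    (ext : ∀ ⦃X' X Y : A⦄ (f₁ f₂ : X ⟶ Y) (s : X' ⟶ X), W s → s ≫ f₁ = s ≫ f₂ →
      ∃ (Y' : A) (t : Y ⟶ Y') (_ : W t), f₁ ≫ t = f₂ ≫ t) :
    W.multiplicativeClosure.HasLeftCalculusOfFractions where
  exists_leftFraction _ _ φ := exists_leftFraction_multiplicativeClosure ore φ.hs φ.f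
  ext _ _ _ f₁ f₂ _ hs h := exists_comp_eq_comp_multiplicativeClosure ext hs f₁ f₂ h

lemma exists_multiplicativeClosure_comp_eq_comp_of_map_eq {B : Type*} [Category B]
    [W.multiplicativeClosure.HasLeftCalculusOfFractions] (L : A ⥤ B) [L.IsLocalization W]
    {X Y : A} {f g : X ⟶ Y} (h : L.map f = L.map g) :
    ∃ (Z : A) (s : Y ⟶ Z), W.multiplicativeClosure s ∧ f ≫ s = g ≫ s := by
  let Q := W.multiplicativeClosure.Q
  have hQ : W.IsInvertedBy Q := fun _ _ s hs =>
    Localization.inverts Q W.multiplicativeClosure s (W.le_multiplicativeClosure _ hs)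
  have hQfg : Q.map f = Q.map g :=
    (AreEqualizedByLocalization.mk W f g L h).map_eq_of_isInvertedBy Q hQ
  obtain ⟨Z, s, hs, hfg⟩ :=
    (MorphismProperty.map_eq_iff_postcomp Q W.multiplicativeClosure f g).1 hQfg
  exact ⟨Z, s, hs, hfg⟩

end MultiplicativeClosure

section FactorsThrough

variable {A : Type*} [Category A]

/-- The morphisms that factor through an object satisfying `P`. If `P` is a triangulated
subcategory, these are the morphisms killed by the Verdier quotient. -/
def factorsThrough (P : ObjectProperty A) : MorphismProperty A := fun X Y f =>
  ∃ (Q : A) (u : X ⟶ Q) (v : Q ⟶ Y), P Q ∧ u ≫ v = f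

variable {P : ObjectProperty A}

lemma factorsThrough.comp_left {X' X Y : A} (a : X' ⟶ X) {f : X ⟶ Y} (hf : factorsThrough P f) :
    factorsThrough P (a ≫ f) := by
  obtain ⟨Q, u, v, hQ, rfl⟩ := hf
  exact ⟨Q, a ≫ u, v, hQ, Category.assoc _ _ _⟩

lemma factorsThrough.add [Preadditive A] [HasBinaryBiproducts A] [P.IsClosedUnderBinaryProducts]
    {X Y : A} {f g : X ⟶ Y} (hf : factorsThrough P f) (hg : factorsThrough P g) :
    factorsThrough P (f + g) := by
  obtain ⟨Q₁, u₁, v₁, h₁, rfl⟩ := hf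
  obtain ⟨Q₂, u₂, v₂, h₂, rfl⟩ := hg
  exact ⟨Q₁ ⊞ Q₂, biprod.lift u₁ u₂, biprod.desc v₁ v₂,
    P.prop_of_isLimit_binaryFan (BinaryBiproduct.isLimit Q₁ Q₂) h₁ h₂, biprod.lift_desc ..⟩

end FactorsThrough

section VerdierQuotient

variable {P : ObjectProperty C}

lemma exists_leftFraction_trW {X Y : C} (φ : P.trW.RightFraction X Y) :
    ∃ ψ : P.trW.LeftFraction X Y, φ.f ≫ ψ.s = φ.s ≫ ψ.f := by
  obtain ⟨Z, g, δ, mem, hZ⟩ := φ.hs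
  obtain ⟨Y', s', g', mem'⟩ := distinguished_cocone_triangle₂ (δ ≫ φ.f⟦(1 : ℤ)⟧')
  obtain ⟨b, hb, -⟩ := complete_distinguished_triangle_morphism₂ _ _ mem mem' φ.f (𝟙 Z)
    (Category.id_comp (δ ≫ φ.f⟦(1 : ℤ)⟧')).symm
  exact ⟨.mk b s' (.mk P mem' hZ), hb.symm⟩

lemma exists_trW_comp_eq_comp [P.IsStableUnderShift ℤ] {X' X Y : C} (f₁ f₂ : X ⟶ Y) (s : X' ⟶ X)
    (hs : P.trW s) (h : s ≫ f₁ = s ≫ f₂) :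
    ∃ (Y' : C) (t : Y ⟶ Y') (_ : P.trW t), f₁ ≫ t = f₂ ≫ t := by
  obtain ⟨Z, g, δ, mem, hZ⟩ := hs
  have hs₀ : s ≫ (f₁ - f₂) = 0 := by rw [Preadditive.comp_sub, h, sub_self]
  obtain ⟨q, hq⟩ : ∃ q : Z ⟶ Y, f₁ - f₂ = g ≫ q := Triangle.yoneda_exact₂ _ mem _ hs₀
  obtain ⟨Y', t, c, mem'⟩ := distinguished_cocone_triangle q
  have hqt : q ≫ t = 0 := comp_distTriang_mor_zero₁₂ _ mem'
  refine ⟨Y', t, .mk' P mem' hZ, ?_⟩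
  rw [← sub_eq_zero, ← Preadditive.sub_comp, hq, Category.assoc, hqt, comp_zero]

/-- Without the octahedral axiom, `P.trW` itself need not be stable under composition. -/
instance hasLeftCalculusOfFractions_multiplicativeClosure_trW [P.IsStableUnderShift ℤ] :
    P.trW.multiplicativeClosure.HasLeftCalculusOfFractions :=
  hasLeftCalculusOfFractions_multiplicativeClosure (fun _ _ => exists_leftFraction_trW)
    (fun _ _ _ => exists_trW_comp_eq_comp)

lemma factorsThrough_of_comp_trW_eq_zero [P.IsStableUnderShift ℤ] {X Y Y' : C} {f : X ⟶ Y}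
    {t : Y ⟶ Y'} (ht : P.trW t) (h : f ≫ t = 0) : factorsThrough P f := by
  obtain ⟨Z, g, δ, mem, hZ⟩ := (P.trW_iff' t).1 ht
  obtain ⟨k, hk⟩ := Triangle.coyoneda_exact₂ _ mem f h
  exact ⟨Z, k, g, hZ, hk.symm⟩

variable [P.IsTriangulated] [P.IsClosedUnderIsomorphisms]

/-- If `f ≫ t = a ≫ b` factors through `Q`, the fibre `Q'` of the composite of `b : Q ⟶ Y'` with
`Y' ⟶ cone t` satisfies `P`, and `f` differs from a morphism factoring through `Q'` by a morphism
killed by `t`. -/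
lemma factorsThrough_of_comp_trW {X Y Y' : C} {f : X ⟶ Y} {t : Y ⟶ Y'} (ht : P.trW t)
    (h : factorsThrough P (f ≫ t)) : factorsThrough P f := by
  obtain ⟨Q, a, b, hQ, hab⟩ := h
  have ⟨Z, g, δ, mem, hZ⟩ := ht
  obtain ⟨Q', hQ', c, d, mem'⟩ := P.distinguished_cocone_triangle₁ (b ≫ g) hQ hZ
  obtain ⟨e, he⟩ : ∃ e : Q' ⟶ Y, c ≫ b = e ≫ t :=
    (complete_distinguished_triangle_morphism₁ _ _ mem' mem b (𝟙 Z)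
      (Category.comp_id (b ≫ g))).imp fun _ h => h.1
  have htg : t ≫ g = 0 := comp_distTriang_mor_zero₁₂ _ mem
  have habg : a ≫ b ≫ g = 0 := by rw [reassoc_of% hab, htg, comp_zero]
  obtain ⟨a', ha'⟩ : ∃ a' : X ⟶ Q', a = a' ≫ c := Triangle.coyoneda_exact₂ _ mem' a habg
  have hsub : factorsThrough P (f - a' ≫ e) := factorsThrough_of_comp_trW_eq_zero ht (by
    rw [Preadditive.sub_comp, Category.assoc, ← he, ← Category.assoc, ← ha', hab, sub_self])
  simpa using hsub.add ⟨Q', a', e, hQ', rfl⟩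

lemma factorsThrough_of_comp_multiplicativeClosure_trW {X Y Y' : C} {f : X ⟶ Y} {t : Y ⟶ Y'}
    (ht : P.trW.multiplicativeClosure t) (h : factorsThrough P (f ≫ t)) :
    factorsThrough P f := by
  induction ht with
  | of t ht => exact factorsThrough_of_comp_trW ht h
  | id => simpa using h
  | comp_of t₁ t₂ _ ht₂ ih =>
    exact ih (factorsThrough_of_comp_trW ht₂ (by simpa using h))

lemma factorsThrough_of_map_eq_zero {E : Type*} [Category E] [HasZeroMorphisms E] (L : C ⥤ E)
    [L.PreservesZeroMorphisms] [L.IsLocalization P.trW] {X Y : C} {f : X ⟶ Y}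
    (hf : L.map f = 0) : factorsThrough P f := by
  rw [← L.map_zero] at hf
  obtain ⟨Z, s, hs, hfs⟩ :=
    exists_multiplicativeClosure_comp_eq_comp_of_map_eq (W := P.trW) L hf
  obtain ⟨O, -, hO⟩ := P.exists_prop_of_containsZero
  exact factorsThrough_of_comp_multiplicativeClosure_trW hs
    ⟨O, 0, 0, hO, by rw [hfs, zero_comp, zero_comp]⟩

end VerdierQuotient

lemma coneIn_eq_trW (P : Set C) : coneIn P = ObjectProperty.trW (· ∈ P) := by
  ext X Y f
  simp only [coneIn, ObjectProperty.trW, exists_prop]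

namespace IsTriangulatedSub

variable {P : Set C} (hP : IsTriangulatedSub P)

include hP

lemma isClosedUnderIsomorphisms : ObjectProperty.IsClosedUnderIsomorphisms (· ∈ P) where
  of_iso {X Y} e hX := by
    obtain ⟨Z, g, δ, mem⟩ := distinguished_cocone_triangle e.hom
    have hZ : IsZero Z := Triangle.isZero₃_of_isIso₁ _ mem (inferInstanceAs (IsIso e.hom))
    exact hP.ext₂ e.hom g δ mem hX (hP.zero Z hZ)

lemma isTriangulated : ObjectProperty.IsTriangulated (· ∈ P) where
  exists_zero := ⟨_, isZero_zero C, hP.zero _ (isZero_zero C)⟩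
  isStableUnderShiftBy n := ⟨fun X hX => hP.shift X hX n⟩
  toIsTriangulatedClosed₂ :=
    have := hP.isClosedUnderIsomorphisms
    .mk' fun T hT h₁ h₃ => hP.ext₂ T.mor₁ T.mor₂ T.mor₃ hT h₁ h₃

end IsTriangulatedSub

lemma distinguished_of_iso_obj₂ {T : Triangle C} (hT : T ∈ distTriang C) {M : C}
    (e : T.obj₂ ≅ M) : Triangle.mk (T.mor₁ ≫ e.hom) (e.inv ≫ T.mor₂) T.mor₃ ∈ distTriang C :=
  isomorphic_distinguished _ hT _ (Triangle.isoMk _ _ (Iso.refl _) e.symm (Iso.refl _)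
    (show (T.mor₁ ≫ e.hom) ≫ e.inv = 𝟙 _ ≫ T.mor₁ by simp)
    (show (e.inv ≫ T.mor₂) ≫ 𝟙 _ = e.inv ≫ T.mor₂ by simp)
    (show T.mor₃ ≫ (𝟙 T.obj₁)⟦(1 : ℤ)⟧' = 𝟙 _ ≫ T.mor₃ by simp))

lemma exists_distinguished_of_shift_distinguished {M A B : C} (n : ℤ) {a : A ⟶ M⟦n⟧}
    {b : M⟦n⟧ ⟶ B} {c : B ⟶ A⟦(1 : ℤ)⟧} (mem : Triangle.mk a b c ∈ distTriang C) :
    ∃ (a' : A⟦-n⟧ ⟶ M) (b' : M ⟶ B⟦-n⟧) (c' : B⟦-n⟧ ⟶ A⟦-n⟧⟦(1 : ℤ)⟧),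
      Triangle.mk a' b' c' ∈ distTriang C :=
  ⟨_, _, _, distinguished_of_iso_obj₂ (Triangle.shift_distinguished _ mem (-n))
    ((shiftEquiv C n).unitIso.symm.app M)⟩

namespace WeightStructure

variable (w : WeightStructure C)

instance isClosedUnderIsomorphisms_LE :
    ObjectProperty.IsClosedUnderIsomorphisms (· ∈ w.LE) where
  of_iso e hX := w.retract_LE ⟨e.inv, e.hom, e.inv_hom_id⟩ hX

instance isClosedUnderIsomorphisms_GE :
    ObjectProperty.IsClosedUnderIsomorphisms (· ∈ w.GE) where
  of_iso e hX := w.retract_GE ⟨e.inv, e.hom, e.inv_hom_id⟩ hX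

lemma le_zero : w.le 0 = w.LE :=
  ObjectProperty.shift_zero (· ∈ w.LE) ℤ

lemma ge_zero : w.ge 0 = w.GE :=
  ObjectProperty.shift_zero (· ∈ w.GE) ℤ

variable {w} {i j : ℤ} {X Y : C}

lemma shift_mem_le_iff (n : ℤ) (h : i + n = j) : X⟦n⟧ ∈ w.le j ↔ X ∈ w.le i :=
  iff_of_eq (congrFun (ObjectProperty.shift_shift (· ∈ w.LE) n (-j) (-i) (by lia)) X)

lemma shift_mem_ge_iff (n : ℤ) (h : i + n = j) : X⟦n⟧ ∈ w.ge j ↔ X ∈ w.ge i :=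
  iff_of_eq (congrFun (ObjectProperty.shift_shift (· ∈ w.GE) n (-j) (-i) (by lia)) X)

lemma eq_zero_of_mem_LE_of_mem_ge_one (hX : X ∈ w.LE) (hY : Y ∈ w.ge 1) (f : X ⟶ Y) : f = 0 := by
  let e : Y⟦(-1 : ℤ)⟧⟦(1 : ℤ)⟧ ≅ Y := (shiftEquiv C (1 : ℤ)).counitIso.app Y
  rw [← cancel_mono e.inv, zero_comp]
  exact w.orthogonal hX hY _

lemma eq_zero_of_mem_le_of_mem_ge (hX : X ∈ w.le i) (hY : Y ∈ w.ge (i + 1)) (f : X ⟶ Y) :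
    f = 0 := by
  apply (shiftFunctor C (-i)).map_injective
  rw [Functor.map_zero]
  exact eq_zero_of_mem_LE_of_mem_ge_one hX ((shift_mem_ge_iff (-i) (by lia)).2 hY) _

variable (w) in
lemma leftOrthogonal_ge_one : ObjectProperty.leftOrthogonal (· ∈ w.ge 1) = (· ∈ w.LE) := by
  ext X
  refine ⟨fun hX => ?_, fun hX Y f hY => eq_zero_of_mem_LE_of_mem_ge_one hX hY f⟩
  obtain ⟨A, B, a, b, c, mem, hA, hB⟩ := w.decomp X
  obtain ⟨r, hr⟩ := Triangle.coyoneda_exact₂ _ mem (𝟙 X)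
    ((Category.id_comp b).trans (hX b hB))
  exact w.retract_LE ⟨r, a, hr.symm⟩ hA

instance isTriangulatedClosed₂_LE : ObjectProperty.IsTriangulatedClosed₂ (· ∈ w.LE) := by
  rw [← w.leftOrthogonal_ge_one]
  infer_instance

lemma mem_le_of_distinguished {T : Triangle C} (hT : T ∈ distTriang C) (h₁ : T.obj₁ ∈ w.le i)
    (h₃ : T.obj₃ ∈ w.le i) : T.obj₂ ∈ w.le i :=
  ObjectProperty.ext_of_isTriangulatedClosed₂ (· ∈ w.LE) _
    (Triangle.shift_distinguished T hT (-i)) h₁ h₃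

end WeightStructure

section Restriction

variable {w : WeightStructure C} {P : Set C} {i : ℤ}

lemma exists_weightDecomposition (hP : IsTriangulatedSub P)
    (hres : IsWeightStructureOn P (P ∩ w.LE) (P ∩ w.GE)) {M : C} (hM : M ∈ P) (i : ℤ) :
    ∃ (A B : C) (a : A ⟶ M) (b : M ⟶ B) (c : B ⟶ A⟦(1 : ℤ)⟧),
      Triangle.mk a b c ∈ distTriang C ∧ A ∈ P ∩ w.le i ∧ B ∈ P ∩ w.ge (i + 1) := by
  obtain ⟨A, B, a, b, c, mem, hA, hB⟩ := hres.decomp _ (hP.shift M hM (-i))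
  have hBP : B ∈ P := (hP.isClosedUnderIsomorphisms).of_iso
    ((shiftEquiv C (1 : ℤ)).counitIso.app B) (hP.shift _ hB.1 1)
  obtain ⟨a', b', c', mem'⟩ := exists_distinguished_of_shift_distinguished (-i) mem
  refine ⟨_, _, a', b', c', mem', ⟨hP.shift A hA.1 _, ?_⟩, ⟨hP.shift B hBP _, ?_⟩⟩
  · exact (WeightStructure.shift_mem_le_iff (i := 0) _ (by lia)).2 (w.le_zero ▸ hA.2)
  · exact (WeightStructure.shift_mem_ge_iff (i := 1) _ (by lia)).2 hB.2

lemma factorsThrough_le_of_mem_le (hP : IsTriangulatedSub P)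
    (hres : IsWeightStructureOn P (P ∩ w.LE) (P ∩ w.GE)) {N R : C} (hN : N ∈ w.le i)
    (hR : R ∈ P) (f : N ⟶ R) : factorsThrough (· ∈ P ∩ w.le i) f := by
  obtain ⟨A, B, a, b, c, mem, hA, hB⟩ := exists_weightDecomposition hP hres hR i
  obtain ⟨f', hf'⟩ := Triangle.coyoneda_exact₂ _ mem f
    (WeightStructure.eq_zero_of_mem_le_of_mem_ge hN hB.2 _)
  exact ⟨A, f', a, hA, hf'.symm⟩

lemma factorsThrough_eqw_of_mem_ge (hP : IsTriangulatedSub P)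
    (hres : IsWeightStructureOn P (P ∩ w.LE) (P ∩ w.GE)) {X M : C} (hX : X ∈ P ∩ w.le i)
    (hM : M ∈ w.ge i) (g : X ⟶ M) : factorsThrough (· ∈ P ∩ w.eqw i) g := by
  obtain ⟨A, B, a, b, c, mem, hA, hB⟩ := exists_weightDecomposition hP hres hX.1 (i - 1)
  rw [sub_add_cancel] at hB
  obtain ⟨g', hg'⟩ := Triangle.yoneda_exact₂ _ mem g
    (WeightStructure.eq_zero_of_mem_le_of_mem_ge hA.2 (by rwa [sub_add_cancel]) _)
  have hB' : B ∈ w.le i := WeightStructure.mem_le_of_distinguished (rot_of_distTriang _ mem) hX.2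
    ((WeightStructure.shift_mem_le_iff 1 (sub_add_cancel i 1)).2 hA.2)
  exact ⟨B, b, g', ⟨hB.1, hB', hB.2⟩, hg'.symm⟩

end Restriction

theorem statement18_general {E : Type*} [Category E] [HasZeroMorphisms E]
    {w : WeightStructure C} {P : Set C} (hP : IsTriangulatedSub P)
    (hres : IsWeightStructureOn P (P ∩ w.LE) (P ∩ w.GE))
    (L : C ⥤ E) [L.PreservesZeroMorphisms] [L.IsLocalization (coneIn P)] {i : ℤ} {M N : C}
    (hM : M ∈ w.ge i) (hN : N ∈ w.le i) {f : N ⟶ M} (hf : L.map f = 0) :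
    factorsThrough (· ∈ P ∩ w.eqw i) f := by
  have := hP.isTriangulated
  have := hP.isClosedUnderIsomorphisms
  have : L.IsLocalization (ObjectProperty.trW (· ∈ P)) := coneIn_eq_trW P ▸ ‹_›
  obtain ⟨R, p, q, hR, rfl⟩ := factorsThrough_of_map_eq_zero (P := (· ∈ P)) L hf
  obtain ⟨X, p₁, p₂, hX, rfl⟩ := factorsThrough_le_of_mem_le hP hres hN hR p
  rw [Category.assoc]
  exact (factorsThrough_eqw_of_mem_ge hP hres hX hM (p₂ ≫ q)).comp_left p₁

/-- let `w` be bounded and restrict to the full triangulated subcategory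
`D` (with class of objects `P`); let `L : C ⥤ E` realize the Verdier quotient `C/D`.
If `M ∈ C_{w≥0}`, `N ∈ C_{w=0}` and `f : N ⟶ M` vanishes in `C/D`, then `f` factors
through an object of `D` lying in `C_{w=0}`. -/
theorem statement18 {E : Type*} [Category E] [HasZeroObject E] [HasShift E ℤ]
    [Preadditive E] [∀ n : ℤ, (shiftFunctor E n).Additive] [Pretriangulated E]
    (w : WeightStructure C) (hw : w.IsBounded)
    (P : Set C) (hP : IsTriangulatedSub P)
    (hres : IsWeightStructureOn P (P ∩ w.LE) (P ∩ w.GE))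
    (L : C ⥤ E) [L.CommShift ℤ] [L.IsTriangulated] [L.IsLocalization (coneIn P)]
    (M N : C) (hM : M ∈ w.GE) (hN : N ∈ w.LE ∩ w.GE)
    (f : N ⟶ M) (hf : L.map f = 0) :
    ∃ (Q : C) (u : N ⟶ Q) (v : Q ⟶ M),
      Q ∈ P ∧ Q ∈ w.LE ∧ Q ∈ w.GE ∧ u ≫ v = f := by
  obtain ⟨Q, u, v, ⟨hQP, hQ⟩, huv⟩ := statement18_general hP hres L (w.ge_zero ▸ hM)
    (w.le_zero ▸ hN.1) hf
  exact ⟨Q, u, v, hQP, w.le_zero ▸ hQ.1, w.ge_zero ▸ hQ.2, huv⟩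

end CWH
end

section
/- Let B be an additive category and let K^b(B) be the bounded homotopy category of cochain complexes over B. Define K^b(B)_{w≤0} as the class of complexes that are homotopy equivalent to complexes concentrated in (cohomological) degrees ≥ 0, and K^b(B)_{w≥0} as the class of complexes homotopy equivalent to complexes concentrated in degrees ≤ 0. Then (K^b(B)_{w≤0}, K^b(B)_{w≥0}) is a bounded weight structure on K^b(B) (the stupid weight structure), and its heart is the Karoubi-closure of B in K^b(B), i.e., the full subcategory whose objects are the retracts in K^b(B) of objects of B viewed as complexes concentrated in degree 0. -/
open CategoryTheory CategoryTheory.Limits CategoryTheory.Pretriangulated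

namespace CWH

variable (C : Type*) [Category C] [HasZeroObject C] [HasShift C ℤ]
  [Preadditive C] [∀ n : ℤ, (shiftFunctor C n).Additive] [Pretriangulated C]

variable {C}

section StupidWeightStructure

variable {B : Type*} [Category B] [Preadditive B] [HasZeroObject B] [HasBinaryBiproducts B]

/-- An object of the homotopy category `K(B)` which is a bounded complex; these are the
objects of the bounded homotopy category `K^b(B)`, viewed as a full triangulated
subcategory of `K(B)`. -/
def boundedObj (X : HomotopyCategory B (ComplexShape.up ℤ)) : Prop :=
  ∃ a b : ℤ, ∀ i : ℤ, (i < a ∨ b < i) → IsZero (X.as.X i)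

/-- `K^b(B)_{w≤0}`: bounded complexes homotopy equivalent to (bounded) complexes
concentrated in degrees `≥ 0`. -/
def stupidLE (B : Type*) [Category B] [Preadditive B] [HasZeroObject B]
    [HasBinaryBiproducts B] : Set (HomotopyCategory B (ComplexShape.up ℤ)) :=
  {X | boundedObj X ∧ ∃ Y : CochainComplex B ℤ,
    (∃ a b : ℤ, ∀ i : ℤ, (i < a ∨ b < i) → IsZero (Y.X i)) ∧
    (∀ i : ℤ, i < 0 → IsZero (Y.X i)) ∧
    Nonempty (X ≅ (HomotopyCategory.quotient B (ComplexShape.up ℤ)).obj Y)}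

/-- `K^b(B)_{w≥0}`: bounded complexes homotopy equivalent to (bounded) complexes
concentrated in degrees `≤ 0`. -/
def stupidGE (B : Type*) [Category B] [Preadditive B] [HasZeroObject B]
    [HasBinaryBiproducts B] : Set (HomotopyCategory B (ComplexShape.up ℤ)) :=
  {X | boundedObj X ∧ ∃ Y : CochainComplex B ℤ,
    (∃ a b : ℤ, ∀ i : ℤ, (i < a ∨ b < i) → IsZero (Y.X i)) ∧
    (∀ i : ℤ, 0 < i → IsZero (Y.X i)) ∧
    Nonempty (X ≅ (HomotopyCategory.quotient B (ComplexShape.up ℤ)).obj Y)}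

/-! Stupid truncation gives degreewise split short exact sequences, hence weight decompositions, and
orthogonality already holds for morphisms of complexes. The delicate axiom is closure under
retracts, since idempotents need not split in `B`. It follows from the description of
`K^b(B)_{w≤0}` as the left orthogonal of the complexes concentrated in a single negative degree:
orthogonality passes to retracts, and if `X`, with lowest degree `m`, has no nonzero map to
complexes concentrated in degree `m`, then the truncation triangle `Y ⟶ X ⟶ Z ⟶ Y⟦1⟧` with `Z`
concentrated in degree `m` gives `Y ≅ Z⟦-1⟧ ⊞ X`, so that `X` is the fibre of a map `Y ⟶ Z⟦-1⟧`
between complexes in degrees `> m`. The other class is dual. For `X` in the heart, the same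
truncation at degree `0` has `Y ⟶ X` equal to zero, and `X` is a retract of `Z`, an object of `B`.
-/

section Pretriangulated

lemma distinguished_of_iso_obj₂_s19 {X Y Y' Z : C} {f : X ⟶ Y} {g : Y ⟶ Z} {h : Z ⟶ X⟦(1 : ℤ)⟧}
    (hT : Triangle.mk f g h ∈ distTriang C) (e : Y' ≅ Y) :
    Triangle.mk (f ≫ e.inv) (e.hom ≫ g) h ∈ distTriang C :=
  isomorphic_distinguished _ hT _ (Triangle.isoMk _ _ (Iso.refl X) e (Iso.refl Z)
    (show (f ≫ e.inv) ≫ e.hom = 𝟙 X ≫ f by simp) (show (e.hom ≫ g) ≫ 𝟙 Z = e.hom ≫ g by simp)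
    (show h ≫ (𝟙 X)⟦(1 : ℤ)⟧' = 𝟙 Z ≫ h by simp))

lemma nonempty_obj₃_iso_biprod_of_mor₁_eq_zero {T : Triangle C} (hT : T ∈ distTriang C)
    (h : T.mor₁ = 0) : Nonempty (T.obj₃ ≅ T.obj₂ ⊞ T.obj₁⟦(1 : ℤ)⟧) := by
  obtain ⟨e, -, -⟩ := exists_iso_binaryBiproduct_of_distTriang _ (rot_of_distTriang T hT)
    (show -T.mor₁⟦(1 : ℤ)⟧' = 0 by rw [h, Functor.map_zero, neg_zero])
  exact ⟨e⟩

lemma nonempty_obj₁_iso_biprod_of_mor₂_eq_zero {T : Triangle C} (hT : T ∈ distTriang C)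
    (h : T.mor₂ = 0) : Nonempty (T.obj₁ ≅ T.obj₃⟦(-1 : ℤ)⟧ ⊞ T.obj₂) := by
  obtain ⟨e, -, -⟩ := exists_iso_binaryBiproduct_of_distTriang _ (inv_rot_of_distTriang T hT)
    (show T.mor₂ ≫ _ = 0 from h ▸ zero_comp)
  exact ⟨e⟩

lemma isRetract_obj₂_obj₃_of_mor₁_eq_zero {T : Triangle C} (hT : T ∈ distTriang C)
    (h : T.mor₁ = 0) : IsRetract T.obj₂ T.obj₃ :=
  have := T.mono₂ hT h
  have := isSplitMono_of_mono T.mor₂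
  ⟨T.mor₂, retraction T.mor₂, IsSplitMono.id T.mor₂⟩

end Pretriangulated

namespace IsRetract

variable {D : Type*} [Category D] {X Y Z : D}

lemma trans (hXY : IsRetract X Y) (hYZ : IsRetract Y Z) : IsRetract X Z := by
  obtain ⟨i, r, hir⟩ := hXY
  obtain ⟨j, s, hjs⟩ := hYZ
  exact ⟨i ≫ j, s ≫ r, by rw [Category.assoc, ← Category.assoc j, hjs, Category.id_comp, hir]⟩

lemma of_iso (e : X ≅ Y) : IsRetract X Y := ⟨e.hom, e.inv, e.hom_inv_id⟩

variable [HasZeroMorphisms D]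

lemma forall_hom_eq_zero_left (h : IsRetract X Y) (hY : ∀ f : Y ⟶ Z, f = 0) (f : X ⟶ Z) :
    f = 0 := by
  obtain ⟨i, r, hir⟩ := h
  rw [← Category.id_comp f, ← hir, Category.assoc, hY (r ≫ f), comp_zero]

lemma forall_hom_eq_zero_right (h : IsRetract X Y) (hY : ∀ f : Z ⟶ Y, f = 0) (f : Z ⟶ X) :
    f = 0 := by
  obtain ⟨i, r, hir⟩ := h
  rw [← Category.comp_id f, ← hir, ← Category.assoc, hY (f ≫ i), zero_comp]

end IsRetract

section StupidTruncation

variable {ι ι₁ ι₂ : Type*} {c : ComplexShape ι} {c₁ : ComplexShape ι₁} {c₂ : ComplexShape ι₂}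

section HasZeroMorphisms

variable {A : Type*} [Category A] [HasZeroMorphisms A] [HasZeroObject A]

/-- The projection of a complex onto its stupid truncation along an embedding whose image is
stable under predecessors. -/
noncomputable def πStupidTrunc (K : HomologicalComplex A c) (e : c₁.Embedding c) [e.IsTruncLE] :
    K ⟶ K.stupidTrunc e :=
  e.liftExtend (𝟙 (K.restriction e)) fun _ hj _ hij =>
    let ⟨i, hi⟩ := e.mem_prev hij
    (hj.notMem hij i hi).elim

lemma isIso_πStupidTrunc_f (K : HomologicalComplex A c) (e : c₁.Embedding c) [e.IsTruncLE]
    (i : ι₁) : IsIso ((πStupidTrunc K e).f (e.f i)) :=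
  (e.isIso_liftExtend_f_iff _ _ rfl).2 (by dsimp; infer_instance)

lemma stupidTruncXIso_hom_comp_d (K : HomologicalComplex A c) (e : c₁.Embedding c) [e.IsRelIff]
    {i j : ι₁} {i' j' : ι} (hi : e.f i = i') (hj : e.f j = j') :
    (K.stupidTruncXIso e hi).hom ≫ K.d i' j' =
      (K.stupidTrunc e).d i' j' ≫ (K.stupidTruncXIso e hj).hom := by
  subst hi hj
  change (((K.restriction e).extendXIso e rfl).hom ≫ 𝟙 _) ≫ (K.restriction e).d i j =
    ((K.restriction e).extend e).d (e.f i) (e.f j) ≫ ((K.restriction e).extendXIso e rfl).hom ≫ 𝟙 _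
  simp only [(K.restriction e).extend_d_eq e rfl rfl, Category.assoc, Category.comp_id,
    Iso.inv_hom_id]

open scoped Classical in
/-- The inclusion into a complex of its stupid truncation along an embedding whose image is
stable under successors. -/
noncomputable def ιStupidTrunc (K : HomologicalComplex A c) (e : c₁.Embedding c) [e.IsTruncGE] :
    K.stupidTrunc e ⟶ K where
  f i' := if h : ∃ i, e.f i = i' then (K.stupidTruncXIso e h.choose_spec).hom else 0
  comm' i' j' hij := by
    by_cases hi : ∃ i, e.f i = i'
    · have hj : ∃ j, e.f j = j' := by
        obtain ⟨i, rfl⟩ := hi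
        exact e.mem_next hij
      rw [dif_pos hi, dif_pos hj]
      exact stupidTruncXIso_hom_comp_d K e _ _
    · exact (K.isZero_stupidTrunc_X e i' (by simpa using hi)).eq_of_src _ _

lemma isIso_ιStupidTrunc_f (K : HomologicalComplex A c) (e : c₁.Embedding c) [e.IsTruncGE]
    (i : ι₁) : IsIso ((ιStupidTrunc K e).f (e.f i)) := by
  have hi : ∃ j, e.f j = e.f i := ⟨i, rfl⟩
  simp only [ιStupidTrunc, dif_pos hi]
  infer_instance

end HasZeroMorphisms

section Preadditive

variable {A : Type*} [Category A] [Preadditive A] [HasZeroObject A]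

/-- The short complex formed by the stupid truncations of a complex along complementary
embeddings. -/
noncomputable def stupidTruncShortComplex (K : HomologicalComplex A c) {e₁ : c₁.Embedding c}
    {e₂ : c₂.Embedding c} [e₁.IsTruncLE] [e₂.IsTruncGE] (ac : e₁.AreComplementary e₂) :
    ShortComplex (HomologicalComplex A c) where
  X₁ := K.stupidTrunc e₂
  X₂ := K
  X₃ := K.stupidTrunc e₁
  f := ιStupidTrunc K e₂
  g := πStupidTrunc K e₁
  zero := ac.symm.hom_ext _

lemma nonempty_splitting_stupidTruncShortComplex (K : HomologicalComplex A c)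
    {e₁ : c₁.Embedding c} {e₂ : c₂.Embedding c} [e₁.IsTruncLE] [e₂.IsTruncGE]
    (ac : e₁.AreComplementary e₂) (i : ι) :
    Nonempty (((stupidTruncShortComplex K ac).map (HomologicalComplex.eval A c i)).Splitting) := by
  by_cases hi : ∃ i₁, e₁.f i₁ = i
  · obtain ⟨i₁, rfl⟩ := hi
    exact ⟨.ofIsZeroOfIsIso _
      (K.isZero_stupidTrunc_X e₂ _ fun i₂ => (ac.disjoint i₁ i₂).symm)
      (isIso_πStupidTrunc_f K e₁ i₁)⟩
  · push Not at hi
    obtain ⟨i₂, rfl⟩ := ac.exists_i₂ i hi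
    exact ⟨.ofIsIsoOfIsZero _ (isIso_ιStupidTrunc_f K e₂ i₂) (K.isZero_stupidTrunc_X e₁ _ hi)⟩

end Preadditive

end StupidTruncation

section Concentrated

/-- `X` is homotopy equivalent to a complex concentrated in degrees `[a, b]`. -/
def ConcentratedIn {A : Type*} [Category A] [Preadditive A] [HasZeroObject A] (a b : ℤ)
    (X : HomotopyCategory A (ComplexShape.up ℤ)) : Prop :=
  ∃ K : CochainComplex A ℤ, K.IsStrictlyGE a ∧ K.IsStrictlyLE b ∧
    Nonempty (X ≅ (HomotopyCategory.quotient A (ComplexShape.up ℤ)).obj K)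

namespace ConcentratedIn

section HasZeroObject

variable {A : Type*} [Category A] [Preadditive A] [HasZeroObject A] {a b c d n : ℤ}
  {X Y : HomotopyCategory A (ComplexShape.up ℤ)}

lemma of_iso (hX : ConcentratedIn a b X) (e : Y ≅ X) : ConcentratedIn a b Y := by
  obtain ⟨K, hGE, hLE, ⟨e'⟩⟩ := hX
  exact ⟨K, hGE, hLE, ⟨e ≪≫ e'⟩⟩

lemma mono (hX : ConcentratedIn a b X) (hca : c ≤ a) (hbd : b ≤ d) : ConcentratedIn c d X := by
  obtain ⟨K, hGE, hLE, he⟩ := hX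
  exact ⟨K, K.isStrictlyGE_of_ge c a hca, K.isStrictlyLE_of_le b d hbd, he⟩

lemma shift (hX : ConcentratedIn a b X) (n : ℤ) (hc : n + c = a) (hd : n + d = b) :
    ConcentratedIn c d (X⟦n⟧) := by
  obtain ⟨K, hGE, hLE, ⟨e⟩⟩ := hX
  exact ⟨K⟦n⟧, K.isStrictlyGE_shift a n c hc, K.isStrictlyLE_shift b n d hd,
    ⟨(shiftFunctor _ n).mapIso e ≪≫
      (((HomotopyCategory.quotient A (ComplexShape.up ℤ)).commShiftIso n).app K).symm⟩⟩

lemma hom_eq_zero (hX : ConcentratedIn a b X) (hY : ConcentratedIn c d Y) (hda : d < a)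
    (f : X ⟶ Y) : f = 0 := by
  obtain ⟨K, _, -, ⟨e⟩⟩ := hX
  obtain ⟨L, -, _, ⟨e'⟩⟩ := hY
  obtain ⟨φ, hφ⟩ := (HomotopyCategory.quotient A (ComplexShape.up ℤ)).map_surjective
    (e.inv ≫ f ≫ e'.hom)
  have φ_eq_zero : φ = 0 := by
    ext i
    rcases lt_or_ge i a with hi | hi
    · exact (K.isZero_of_isStrictlyGE a i hi).eq_of_src _ _
    · exact (L.isZero_of_isStrictlyLE d i (hda.trans_le hi)).eq_of_tgt _ _
  rw [← cancel_epi e.inv, ← cancel_mono e'.hom, Category.assoc, ← hφ, φ_eq_zero]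
  simp

lemma exists_iso_single (hX : ConcentratedIn n n X) :
    ∃ M : A, Nonempty (X ≅ (HomotopyCategory.quotient A (ComplexShape.up ℤ)).obj
      ((HomologicalComplex.single A (ComplexShape.up ℤ) n).obj M)) := by
  obtain ⟨K, _, _, ⟨e⟩⟩ := hX
  obtain ⟨M, ⟨e'⟩⟩ := K.exists_iso_single n
  exact ⟨M, ⟨e ≪≫ (HomotopyCategory.quotient A _).mapIso e'⟩⟩

end HasZeroObject

section HasBinaryBiproducts

variable {A : Type*} [Category A] [Preadditive A] [HasZeroObject A] [HasBinaryBiproducts A]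
  {a b : ℤ} {X Y : HomotopyCategory A (ComplexShape.up ℤ)}

lemma cone {T : Triangle (HomotopyCategory A (ComplexShape.up ℤ))} (hT : T ∈ distTriang _)
    (h₁ : ConcentratedIn (a + 1) (b + 1) T.obj₁) (h₂ : ConcentratedIn a b T.obj₂) :
    ConcentratedIn a b T.obj₃ := by
  obtain ⟨K, _, _, ⟨e₁⟩⟩ := h₁
  obtain ⟨L, _, _, ⟨e₂⟩⟩ := h₂
  obtain ⟨φ, hφ⟩ := (HomotopyCategory.quotient A (ComplexShape.up ℤ)).map_surjective
    (e₁.inv ≫ T.mor₁ ≫ e₂.hom)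
  obtain ⟨e, -, -⟩ := exists_iso_of_arrow_iso T _ hT
    (HomotopyCategory.mappingCone_triangleh_distinguished φ)
    (Arrow.isoMk e₁ e₂ (by
      change e₁.hom ≫ (HomotopyCategory.quotient A (ComplexShape.up ℤ)).map φ = T.mor₁ ≫ e₂.hom
      simp [hφ]))
  refine ⟨CochainComplex.mappingCone φ,
    CochainComplex.isStrictlyGE_mappingCone φ (a + 1) a a (by lia) le_rfl,
    (CochainComplex.isStrictlyLE_iff _ b).2 fun i hi => ?_, ⟨Triangle.π₃.mapIso e⟩⟩
  exact (CochainComplex.mappingCone.isZero_X_iff φ i).2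
    ⟨K.isZero_of_isStrictlyLE (b + 1) _ (by lia), L.isZero_of_isStrictlyLE b i hi⟩

lemma fiber {T : Triangle (HomotopyCategory A (ComplexShape.up ℤ))} (hT : T ∈ distTriang _)
    (h₂ : ConcentratedIn a b T.obj₂) (h₃ : ConcentratedIn (a - 1) (b - 1) T.obj₃) :
    ConcentratedIn a b T.obj₁ := by
  have shifted : ConcentratedIn (a - 1) (b - 1) (T.obj₁⟦(1 : ℤ)⟧) :=
    cone (rot_of_distTriang T hT) (h₂.mono (by lia) (by lia)) h₃
  exact (shifted.shift (-1) (by lia) (by lia)).of_iso ((shiftEquiv _ (1 : ℤ)).unitIso.app T.obj₁)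

lemma of_biprod_right (hXY : ConcentratedIn a b (X ⊞ Y)) (hX : ConcentratedIn (a - 1) (b - 1) X) :
    ConcentratedIn a b Y :=
  fiber (binaryBiproductTriangle_distinguished Y X) (hXY.of_iso (biprod.braiding Y X)) hX

lemma of_biprod_left (hXY : ConcentratedIn a b (X ⊞ Y)) (hY : ConcentratedIn (a + 1) (b + 1) Y) :
    ConcentratedIn a b X :=
  cone (binaryBiproductTriangle_distinguished Y X) hY (hXY.of_iso (biprod.braiding Y X))

end HasBinaryBiproducts

end ConcentratedIn

variable {A : Type*} [Category A] [Preadditive A] [HasZeroObject A]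

lemma concentratedIn_quotient_obj {a b : ℤ} (K : CochainComplex A ℤ) [hGE : K.IsStrictlyGE a]
    [hLE : K.IsStrictlyLE b] :
    ConcentratedIn a b ((HomotopyCategory.quotient A (ComplexShape.up ℤ)).obj K) :=
  ⟨K, hGE, hLE, ⟨Iso.refl _⟩⟩

lemma concentratedIn_single (n : ℤ) (M : A) :
    ConcentratedIn n n ((HomotopyCategory.quotient A (ComplexShape.up ℤ)).obj
      ((HomologicalComplex.single A (ComplexShape.up ℤ) n).obj M)) :=
  concentratedIn_quotient_obj ((CochainComplex.singleFunctor A n).obj M)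

variable [HasBinaryBiproducts A]

lemma exists_stupidTrunc_distinguished {ι₁ ι₂ : Type*} {c₁ : ComplexShape ι₁}
    {c₂ : ComplexShape ι₂} (K : CochainComplex A ℤ) {e₁ : c₁.Embedding (ComplexShape.up ℤ)}
    {e₂ : c₂.Embedding (ComplexShape.up ℤ)} [e₁.IsTruncLE] [e₂.IsTruncGE]
    (ac : e₁.AreComplementary e₂) :
    ∃ h, Triangle.mk ((HomotopyCategory.quotient A (ComplexShape.up ℤ)).map (ιStupidTrunc K e₂))
      ((HomotopyCategory.quotient A (ComplexShape.up ℤ)).map (πStupidTrunc K e₁)) h ∈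
        distTriang (HomotopyCategory A (ComplexShape.up ℤ)) := by
  let σ i := (nonempty_splitting_stupidTruncShortComplex K ac i).some
  exact ⟨_, (HomotopyCategory.distinguished_iff_iso_trianglehOfDegreewiseSplit _).2
    ⟨stupidTruncShortComplex K ac, σ, ⟨Iso.refl _⟩⟩⟩

namespace ConcentratedIn

variable {a b m n : ℤ} {X : HomotopyCategory A (ComplexShape.up ℤ)}

lemma exists_triangle (hX : ConcentratedIn a b X) (n : ℤ) :
    ∃ (Y Z : HomotopyCategory A (ComplexShape.up ℤ)) (f : Y ⟶ X) (g : X ⟶ Z)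
      (h : Z ⟶ Y⟦(1 : ℤ)⟧), Triangle.mk f g h ∈ distTriang _ ∧
        ConcentratedIn n b Y ∧ ConcentratedIn a (n - 1) Z := by
  obtain ⟨K, _, _, ⟨e⟩⟩ := hX
  obtain ⟨h, hT⟩ := exists_stupidTrunc_distinguished K
    (ComplexShape.Embedding.embeddingUpInt_areComplementary (n - 1) n (by lia))
  exact ⟨_, _, _, _, h, distinguished_of_iso_obj₂_s19 hT e, concentratedIn_quotient_obj _,
    concentratedIn_quotient_obj _⟩

lemma succ_left_of_forall_hom_eq_zero (hX : ConcentratedIn m b X)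
    (hom_eq_zero : ∀ Z, ConcentratedIn m m Z → ∀ f : X ⟶ Z, f = 0) :
    ConcentratedIn (m + 1) (max b (m + 2)) X := by
  obtain ⟨Y, Z, f, g, h, hT, hY, hZ⟩ := hX.exists_triangle (m + 1)
  rw [add_sub_cancel_right] at hZ
  obtain ⟨e : Y ≅ Z⟦(-1 : ℤ)⟧ ⊞ X⟩ :=
    nonempty_obj₁_iso_biprod_of_mor₂_eq_zero hT (hom_eq_zero Z hZ g)
  have hYbig : ConcentratedIn (m + 1) (max b (m + 2)) Y := hY.mono le_rfl (le_max_left _ _)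
  have hZshift : ConcentratedIn (m + 1) (m + 1) (Z⟦(-1 : ℤ)⟧) := hZ.shift (-1) (by lia) (by lia)
  -- The fibre of `Y ⟶ Z⟦-1⟧` has a term in degree `m + 2`, contributed by `Z⟦-1⟧`.
  exact (hYbig.of_iso e.symm).of_biprod_right (hZshift.mono (by lia) (by lia))

lemma pred_right_of_forall_hom_eq_zero (hX : ConcentratedIn a m X)
    (hom_eq_zero : ∀ Y, ConcentratedIn m m Y → ∀ f : Y ⟶ X, f = 0) :
    ConcentratedIn (min a (m - 2)) (m - 1) X := by
  obtain ⟨Y, Z, f, g, h, hT, hY, hZ⟩ := hX.exists_triangle m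
  obtain ⟨e : Z ≅ X ⊞ Y⟦(1 : ℤ)⟧⟩ :=
    nonempty_obj₃_iso_biprod_of_mor₁_eq_zero hT (hom_eq_zero Y hY f)
  have hZbig : ConcentratedIn (min a (m - 2)) (m - 1) Z := hZ.mono (min_le_left _ _) le_rfl
  have hYshift : ConcentratedIn (m - 1) (m - 1) (Y⟦(1 : ℤ)⟧) := hY.shift 1 (by lia) (by lia)
  exact (hZbig.of_iso e.symm).of_biprod_left (hYshift.mono (by lia) (by lia))

lemma exists_left_of_forall_hom_eq_zero (hX : ConcentratedIn a b X)
    (hom_eq_zero : ∀ m < n, ∀ Z, ConcentratedIn m m Z → ∀ f : X ⟶ Z, f = 0) :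
    ∃ d, ConcentratedIn n d X := by
  rcases le_total n a with hna | han
  · exact ⟨b, hX.mono hna le_rfl⟩
  induction n, han using Int.leInduction with
  | base => exact ⟨b, hX⟩
  | succ k _ ih =>
    obtain ⟨d, hd⟩ := ih fun m hm => hom_eq_zero m (by lia)
    exact ⟨_, hd.succ_left_of_forall_hom_eq_zero (hom_eq_zero k (by lia))⟩

lemma exists_right_of_forall_hom_eq_zero (hX : ConcentratedIn a b X)
    (hom_eq_zero : ∀ m > n, ∀ Y, ConcentratedIn m m Y → ∀ f : Y ⟶ X, f = 0) :
    ∃ c, ConcentratedIn c n X := by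
  rcases le_total b n with hbn | hnb
  · exact ⟨a, hX.mono le_rfl hbn⟩
  induction n, hnb using Int.leInductionDown with
  | base => exact ⟨a, hX⟩
  | pred k _ ih =>
    obtain ⟨c, hc⟩ := ih fun m hm => hom_eq_zero m (by lia)
    exact ⟨_, hc.pred_right_of_forall_hom_eq_zero (hom_eq_zero k (by lia))⟩

end ConcentratedIn

end Concentrated

section BoundedObj

variable {A : Type*} [Category A] [Preadditive A] {X : HomotopyCategory A (ComplexShape.up ℤ)}

lemma boundedObj_quotient_obj_iff (K : CochainComplex A ℤ) :
    boundedObj ((HomotopyCategory.quotient A (ComplexShape.up ℤ)).obj K) ↔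
      ∃ a b, K.IsStrictlyGE a ∧ K.IsStrictlyLE b := by
  simp only [CochainComplex.isStrictlyGE_iff, CochainComplex.isStrictlyLE_iff, boundedObj, or_imp,
    forall_and]
  rfl

lemma boundedObj_quotient_obj (a b : ℤ) (K : CochainComplex A ℤ) [hGE : K.IsStrictlyGE a]
    [hLE : K.IsStrictlyLE b] :
    boundedObj ((HomotopyCategory.quotient A (ComplexShape.up ℤ)).obj K) :=
  (boundedObj_quotient_obj_iff K).2 ⟨a, b, hGE, hLE⟩

lemma boundedObj.shift (hX : boundedObj X) (n : ℤ) : boundedObj (X⟦n⟧) := by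
  obtain ⟨K, rfl⟩ := HomotopyCategory.quotient_obj_surjective X
  obtain ⟨a, b, hK⟩ := hX
  rw [HomotopyCategory.shift_quotient_obj]
  exact ⟨a - n, b - n, fun i hi => hK (i + n) (by lia)⟩

variable [HasZeroObject A]

lemma boundedObj.exists_concentratedIn (hX : boundedObj X) : ∃ a b, ConcentratedIn a b X := by
  obtain ⟨a, b, hGE, hLE⟩ := (boundedObj_quotient_obj_iff X.as).1 hX
  exact ⟨a, b, X.as, hGE, hLE, ⟨Iso.refl _⟩⟩

end BoundedObj

section Weights

variable {X Y : HomotopyCategory B (ComplexShape.up ℤ)}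

lemma mem_stupidLE_iff : X ∈ stupidLE B ↔ boundedObj X ∧ ∃ b, ConcentratedIn 0 b X := by
  refine and_congr_right fun _ => ⟨?_, ?_⟩
  · rintro ⟨K, ⟨a, b, hab⟩, hGE, e⟩
    exact ⟨b, K, (K.isStrictlyGE_iff 0).2 hGE,
      (K.isStrictlyLE_iff b).2 fun i hi => hab i (.inr hi), e⟩
  · rintro ⟨b, K, _, _, e⟩
    exact ⟨K, boundedObj_quotient_obj 0 b K, fun i hi => K.isZero_of_isStrictlyGE 0 i hi, e⟩

lemma mem_stupidGE_iff : X ∈ stupidGE B ↔ boundedObj X ∧ ∃ a, ConcentratedIn a 0 X := by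
  refine and_congr_right fun _ => ⟨?_, ?_⟩
  · rintro ⟨K, ⟨a, b, hab⟩, hLE, e⟩
    exact ⟨a, K, (K.isStrictlyGE_iff a).2 fun i hi => hab i (.inl hi),
      (K.isStrictlyLE_iff 0).2 hLE, e⟩
  · rintro ⟨a, K, _, _, e⟩
    exact ⟨K, boundedObj_quotient_obj a 0 K, fun i hi => K.isZero_of_isStrictlyLE 0 i hi, e⟩

lemma mem_stupidLE_iff_forall_hom_eq_zero (hX : boundedObj X) :
    X ∈ stupidLE B ↔ ∀ m < 0, ∀ Z, ConcentratedIn m m Z → ∀ f : X ⟶ Z, f = 0 := by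
  rw [mem_stupidLE_iff, and_iff_right hX]
  refine ⟨fun ⟨b, hb⟩ m hm Z hZ => hb.hom_eq_zero hZ hm, fun h => ?_⟩
  obtain ⟨a, b, hab⟩ := hX.exists_concentratedIn
  exact hab.exists_left_of_forall_hom_eq_zero h

lemma mem_stupidGE_iff_forall_hom_eq_zero (hX : boundedObj X) :
    X ∈ stupidGE B ↔ ∀ m > 0, ∀ Z, ConcentratedIn m m Z → ∀ f : Z ⟶ X, f = 0 := by
  rw [mem_stupidGE_iff, and_iff_right hX]
  refine ⟨fun ⟨a, ha⟩ m hm Z hZ => hZ.hom_eq_zero ha hm, fun h => ?_⟩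
  obtain ⟨a, b, hab⟩ := hX.exists_concentratedIn
  exact hab.exists_right_of_forall_hom_eq_zero h

lemma mem_stupidLE_of_isRetract (hX : boundedObj X) (hXY : IsRetract X Y)
    (hY : Y ∈ stupidLE B) : X ∈ stupidLE B :=
  (mem_stupidLE_iff_forall_hom_eq_zero hX).2 fun m hm Z hZ => hXY.forall_hom_eq_zero_left <|
    (mem_stupidLE_iff_forall_hom_eq_zero hY.1).1 hY m hm Z hZ

lemma mem_stupidGE_of_isRetract (hX : boundedObj X) (hXY : IsRetract X Y)
    (hY : Y ∈ stupidGE B) : X ∈ stupidGE B :=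
  (mem_stupidGE_iff_forall_hom_eq_zero hX).2 fun m hm Z hZ => hXY.forall_hom_eq_zero_right <|
    (mem_stupidGE_iff_forall_hom_eq_zero hY.1).1 hY m hm Z hZ

lemma shift_mem_stupidLE {a b : ℤ} (hX : boundedObj X) (hab : ConcentratedIn a b X) {n : ℤ}
    (hn : n ≤ a) : X⟦n⟧ ∈ stupidLE B :=
  mem_stupidLE_iff.2
    ⟨hX.shift n, b - n, (hab.mono hn le_rfl).shift n (add_zero n) (add_sub_cancel n b)⟩

lemma shift_mem_stupidGE {a b : ℤ} (hX : boundedObj X) (hab : ConcentratedIn a b X) {n : ℤ}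
    (hn : b ≤ n) : X⟦n⟧ ∈ stupidGE B :=
  mem_stupidGE_iff.2
    ⟨hX.shift n, a - n, (hab.mono le_rfl hn).shift n (add_sub_cancel n a) (add_zero n)⟩

lemma hom_shift_eq_zero_of_mem_stupidLE_of_mem_stupidGE (hX : X ∈ stupidLE B)
    (hY : Y ∈ stupidGE B) (f : X ⟶ Y⟦(1 : ℤ)⟧) : f = 0 := by
  obtain ⟨-, b, hb⟩ := mem_stupidLE_iff.1 hX
  obtain ⟨-, a, ha⟩ := mem_stupidGE_iff.1 hY
  exact hb.hom_eq_zero (ha.shift 1 (add_sub_cancel 1 a) (add_neg_cancel 1)) neg_one_lt_zero f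

lemma exists_stupid_weight_decomposition {M : HomotopyCategory B (ComplexShape.up ℤ)}
    (hM : boundedObj M) :
    ∃ (X Y : HomotopyCategory B (ComplexShape.up ℤ)) (f : X ⟶ M) (g : M ⟶ Y)
      (h : Y ⟶ X⟦(1 : ℤ)⟧), Triangle.mk f g h ∈ distTriang _ ∧
        X ∈ stupidLE B ∧ Y⟦(-1 : ℤ)⟧ ∈ stupidGE B := by
  obtain ⟨K : CochainComplex B ℤ, rfl⟩ := HomotopyCategory.quotient_obj_surjective M
  obtain ⟨a, b, _, _⟩ := (boundedObj_quotient_obj_iff K).1 hM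
  obtain ⟨h, hT⟩ := exists_stupidTrunc_distinguished K
    (ComplexShape.Embedding.embeddingUpInt_areComplementary (-1) 0 (by lia))
  refine ⟨_, _, _, _, h, hT, ?_, ?_⟩
  · exact mem_stupidLE_iff.2 ⟨boundedObj_quotient_obj 0 b _, b, concentratedIn_quotient_obj _⟩
  · exact shift_mem_stupidGE (a := a) (b := -1) (boundedObj_quotient_obj a (-1) _)
      (concentratedIn_quotient_obj _) le_rfl

lemma isWeightStructureOn_stupidLE_stupidGE :
    IsWeightStructureOn {X : HomotopyCategory B (ComplexShape.up ℤ) | boundedObj X}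
      (stupidLE B) (stupidGE B) where
  le_sub _ hX := hX.1
  ge_sub _ hX := hX.1
  retract_le _ _ := mem_stupidLE_of_isRetract
  retract_ge _ _ := mem_stupidGE_of_isRetract
  shift_le _ hX :=
    let ⟨hX', _, hb⟩ := mem_stupidLE_iff.1 hX
    shift_mem_stupidLE hX' hb neg_one_lt_zero.le
  shift_ge _ hX :=
    let ⟨hX', _, ha⟩ := mem_stupidGE_iff.1 hX
    shift_mem_stupidGE hX' ha zero_le_one
  orthogonal _ _ := hom_shift_eq_zero_of_mem_stupidLE_of_mem_stupidGE
  decomp _ := exists_stupid_weight_decomposition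

lemma single_mem_stupidLE_inter_stupidGE (M : B) :
    (HomotopyCategory.quotient B (ComplexShape.up ℤ)).obj
      ((HomologicalComplex.single B (ComplexShape.up ℤ) 0).obj M) ∈ stupidLE B ∩ stupidGE B := by
  have bounded := boundedObj_quotient_obj 0 0 ((CochainComplex.singleFunctor B 0).obj M)
  exact ⟨mem_stupidLE_iff.2 ⟨bounded, 0, concentratedIn_single 0 M⟩,
    mem_stupidGE_iff.2 ⟨bounded, 0, concentratedIn_single 0 M⟩⟩

lemma exists_isRetract_single_of_mem_stupidLE_of_mem_stupidGE (hLE : X ∈ stupidLE B)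
    (hGE : X ∈ stupidGE B) :
    ∃ M : B, IsRetract X ((HomotopyCategory.quotient B (ComplexShape.up ℤ)).obj
      ((HomologicalComplex.single B (ComplexShape.up ℤ) 0).obj M)) := by
  obtain ⟨-, b, hb⟩ := mem_stupidLE_iff.1 hLE
  obtain ⟨-, a, ha⟩ := mem_stupidGE_iff.1 hGE
  obtain ⟨Y, Z, f, g, h, hT, hY, hZ⟩ := hb.exists_triangle 1
  have f_eq_zero : f = 0 := hY.hom_eq_zero ha zero_lt_one f
  obtain ⟨M, ⟨e⟩⟩ := hZ.exists_iso_single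
  exact ⟨M, (isRetract_obj₂_obj₃_of_mor₁_eq_zero hT f_eq_zero).trans (.of_iso e)⟩

lemma stupidLE_inter_stupidGE_eq :
    stupidLE B ∩ stupidGE B = {X | boundedObj X ∧
      ∃ M : B, IsRetract X ((HomotopyCategory.quotient B (ComplexShape.up ℤ)).obj
        ((HomologicalComplex.single B (ComplexShape.up ℤ) 0).obj M))} := by
  ext X
  constructor
  · exact fun ⟨hLE, hGE⟩ =>
      ⟨hLE.1, exists_isRetract_single_of_mem_stupidLE_of_mem_stupidGE hLE hGE⟩
  · rintro ⟨hX, M, hXM⟩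
    obtain ⟨hLE, hGE⟩ := single_mem_stupidLE_inter_stupidGE M
    exact ⟨mem_stupidLE_of_isRetract hX hXM hLE, mem_stupidGE_of_isRetract hX hXM hGE⟩

end Weights

/-- the pair `(K^b(B)_{w≤0}, K^b(B)_{w≥0})` is a weight structure on the
bounded homotopy category `K^b(B)` (the full triangulated subcategory of bounded
complexes in `K(B)`); it is bounded, and its heart is the Karoubi-closure of `B` in
`K^b(B)`, i.e., the retracts in `K^b(B)` of objects of `B` placed in degree `0`. -/
theorem statement19 :
    IsWeightStructureOn {X : HomotopyCategory B (ComplexShape.up ℤ) | boundedObj X}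
      (stupidLE B) (stupidGE B) ∧
    (∀ X : HomotopyCategory B (ComplexShape.up ℤ), boundedObj X →
      (∃ n : ℤ, X⟦n⟧ ∈ stupidLE B) ∧ (∃ n : ℤ, X⟦n⟧ ∈ stupidGE B)) ∧
    stupidLE B ∩ stupidGE B =
      {X : HomotopyCategory B (ComplexShape.up ℤ) | boundedObj X ∧
        ∃ b : B, IsRetract X ((HomotopyCategory.quotient B (ComplexShape.up ℤ)).obj
          ((HomologicalComplex.single B (ComplexShape.up ℤ) 0).obj b))} := by
  refine ⟨isWeightStructureOn_stupidLE_stupidGE, fun X hX => ?_, stupidLE_inter_stupidGE_eq⟩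
  obtain ⟨a, b, hab⟩ := hX.exists_concentratedIn
  exact ⟨⟨a, shift_mem_stupidLE hX hab le_rfl⟩, ⟨b, shift_mem_stupidGE hX hab le_rfl⟩⟩

end StupidWeightStructure

end CWH
end
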